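/- Let (p_n)_{n≥1} be a Schauder decomposition of a complex Banach space X. Then (p_n) is R-Schauder if and only if for every nondecreasing sequence (c_n)_{n≥1} of real numbers with 0 < c_n < 1, the multiplier operator T = M_c has the property that the sets {T^n : n ≥ 0} and {n T^n (I − T) : n ≥ 1} are both R-bounded (i.e. T is R-Ritt). -/

import Mathlib

open Filter Topology NormedSpace

/-- Average over all sign vectors `(ε_1,…,ε_k) ∈ {−1,1}^k` of `‖∑_j ε_j v_j‖`. -/
noncomputable def signAvg {X : Type*} [NormedAddCommGroup X] [NormedSpace ℂ X]
    (k : ℕ) (v : Fin k → X) : ℝ :=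
  (2 ^ k : ℝ)⁻¹ * ∑ ε : Fin k → Bool, ‖∑ j : Fin k, (if ε j then (1 : ℝ) else -1) • v j‖

/-- A set of bounded operators on `X` is `R`-bounded. -/
def IsRBounded {X : Type*} [NormedAddCommGroup X] [NormedSpace ℂ X]
    (F : Set (X →L[ℂ] X)) : Prop :=
  ∃ C : ℝ, 0 ≤ C ∧ ∀ (k : ℕ) (T : Fin k → X →L[ℂ] X) (x : Fin k → X),
    (∀ j, T j ∈ F) → signAvg k (fun j => (T j) (x j)) ≤ C * signAvg k x

/-- `(p n)` is a Schauder decomposition of `X`: the `p n` are pairwise "orthogonal"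
bounded projections whose partial sums converge pointwise to the identity.
(Indexing starts at `0`, corresponding to `n = 1` in the classical notation.) -/
def IsSchauderDecomposition {X : Type*} [NormedAddCommGroup X] [NormedSpace ℂ X]
    (p : ℕ → X →L[ℂ] X) : Prop :=
  (∀ n, (p n).comp (p n) = p n) ∧
  (∀ m n, m ≠ n → (p m).comp (p n) = 0) ∧
  (∀ x : X, Tendsto (fun N => ∑ n ∈ Finset.range N, p n x) atTop (nhds x))

/-- The partial sum projection `P_N = ∑_{n<N} p_n`. -/
noncomputable def partialSum {X : Type*} [NormedAddCommGroup X] [NormedSpace ℂ X]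
    (p : ℕ → X →L[ℂ] X) (N : ℕ) : X →L[ℂ] X :=
  ∑ n ∈ Finset.range N, p n

/-!
Summation by parts exhibits a multiplier with nondecreasing symbol `a : ℕ → [0, 1]` as a pointwise
limit of differences of elements of the absolutely convex hull of the partial sums `P_N`. So if
`(P_N)` is `R`-bounded, then so is the set of all these multipliers. It contains the powers of
`T = M_c` and, because `w_n(t) = t ^ n (1 + n (1 - t))` maps `[0, 1]` to itself and is increasing
there, also the operators `w_n(T)`; finally `n T ^ n (1 - T) = w_n(T) - T ^ n`.

Conversely, let `c_k` tend to `1` so fast that suitable exponents `m_N` fit between `1 / (1 - c_k)`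
for `k < N` and for `k ≥ N`. Then `c_k ^ m_N` is close to `0` for `k < N` and to `1` for `k ≥ N`,
and `P_N` differs from `1 - T ^ m_N` by an operator whose norm is summable in `N`. Families of
operators with summable norms are `R`-bounded.
-/

open scoped Pointwise

lemma sum_smul_mem_of_convex_of_sum_le_one {ι 𝕜 E : Type*} [Field 𝕜] [LinearOrder 𝕜]
    [IsStrictOrderedRing 𝕜] [AddCommGroup E] [Module 𝕜 E] {s : Set E} (hs : Convex 𝕜 s)
    (h0 : 0 ∈ s) {t : Finset ι} {w : ι → 𝕜} {z : ι → E}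
    (hw : ∀ i ∈ t, 0 ≤ w i) (hw1 : ∑ i ∈ t, w i ≤ 1) (hz : ∀ i ∈ t, z i ∈ s) :
    ∑ i ∈ t, w i • z i ∈ s := by
  have h := hs.sum_mem (t := t.insertNone) (w := fun o => o.elim (1 - ∑ i ∈ t, w i) w)
    (z := fun o => o.elim 0 z) (by simpa [Option.forall, hw1] using hw) (by simp)
    (by simpa [Option.forall, h0] using hz)
  simpa using h

lemma sum_smul_mem_absConvexHull_sub_absConvexHull {E : Type*} [AddCommGroup E] [Module ℝ E]
    (z : ℕ → E) {a : ℕ → ℝ} (ha : Monotone a) (ha01 : ∀ n, a n ∈ Set.Icc (0 : ℝ) 1) (N : ℕ) :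
    ∑ n ∈ Finset.range (N + 1), a n • z n ∈
      absConvexHull ℝ (Set.range fun n => ∑ i ∈ Finset.range (n + 1), z i) -
        absConvexHull ℝ (Set.range fun n => ∑ i ∈ Finset.range (n + 1), z i) := by
  set s := Set.range fun n => ∑ i ∈ Finset.range (n + 1), z i
  have hs : Convex ℝ (absConvexHull ℝ s) := convex_absConvexHull
  have h0 : (0 : E) ∈ absConvexHull ℝ s := zero_mem_absConvexHull
  have hmem (n : ℕ) : ∑ i ∈ Finset.range (n + 1), z i ∈ absConvexHull ℝ s :=
    subset_absConvexHull ⟨n, rfl⟩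
  rw [Finset.sum_range_by_parts]
  refine Set.sub_mem_sub (hs.smul_mem_of_zero_mem h0 (hmem N) (ha01 N))
    (sum_smul_mem_of_convex_of_sum_le_one hs h0 (fun n _ => sub_nonneg.2 (ha n.le_succ)) ?_
      fun n _ => hmem n)
  rw [Finset.sum_range_sub]
  exact (sub_le_self _ (ha01 0).1).trans (ha01 N).2

lemma monotoneOn_pow_mul_one_add_mul_one_sub (n : ℕ) :
    MonotoneOn (fun t : ℝ => t ^ n * (1 + n * (1 - t))) (Set.Icc 0 1) := by
  rcases n with _ | n
  · simpa using monotoneOn_const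
  refine monotoneOn_of_hasDerivWithinAt_nonneg
    (f' := fun t => (n + 1) * (n + 2) * (t ^ n * (1 - t))) (convex_Icc 0 1) (by fun_prop)
    (fun t _ => HasDerivAt.hasDerivWithinAt ?_) fun t ht => ?_
  · refine ((hasDerivAt_pow (n + 1) t).mul ((((hasDerivAt_id t).const_sub 1).const_mul
      ((n + 1 : ℕ) : ℝ)).const_add 1)).congr_deriv ?_
    simp only [id, Nat.add_sub_cancel]
    push_cast
    ring
  · rw [interior_Icc] at ht
    have := ht.1
    have := sub_pos.2 ht.2
    positivity

lemma pow_mul_one_add_mul_one_sub_mem_Icc (n : ℕ) {t : ℝ} (ht : t ∈ Set.Icc (0 : ℝ) 1) :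
    t ^ n * (1 + n * (1 - t)) ∈ Set.Icc (0 : ℝ) 1 := by
  have h1 : 0 ≤ 1 - t := sub_nonneg.2 ht.2
  refine ⟨mul_nonneg (pow_nonneg ht.1 n) (by positivity), ?_⟩
  simpa using monotoneOn_pow_mul_one_add_mul_one_sub n ht (Set.right_mem_Icc.2 zero_le_one) ht.2

lemma pow_mul_nat_mul_one_sub_le_one (n : ℕ) {t : ℝ} (ht : t ∈ Set.Icc (0 : ℝ) 1) :
    t ^ n * (n * (1 - t)) ≤ 1 :=
  (mul_le_mul_of_nonneg_left (le_add_of_nonneg_left zero_le_one) (pow_nonneg ht.1 n)).trans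
    (pow_mul_one_add_mul_one_sub_mem_Icc n ht).2

lemma abs_one_sub_pow_sub_ite_le {t K : ℝ} {m : ℕ} {P : Prop} [Decidable P]
    (ht : t ∈ Set.Icc (0 : ℝ) 1) (hK : 0 < K) (hP : P → K ≤ m * (1 - t))
    (hnP : ¬P → m * (1 - t) ≤ 1 / K) : |1 - t ^ m - if P then 1 else 0| ≤ 1 / K := by
  have hpow : 0 ≤ t ^ m := pow_nonneg ht.1 m
  split_ifs with h
  · rw [sub_sub_cancel_left, abs_neg, abs_of_nonneg hpow, le_div_iff₀ hK]
    exact (mul_le_mul_of_nonneg_left (hP h) hpow).trans (pow_mul_nat_mul_one_sub_le_one m ht)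
  · have bernoulli : 1 + m * (t - 1) ≤ t ^ m := one_add_mul_sub_le_pow (by linarith [ht.1]) m
    rw [sub_zero, abs_of_nonneg (sub_nonneg.2 (pow_le_one₀ ht.1 ht.2))]
    linarith [hnP h]

lemma exists_pow_approx_step :
    ∃ (c : ℕ → ℝ) (m : ℕ → ℕ), Monotone c ∧ (∀ k, 0 < c k ∧ c k < 1) ∧
      ∀ N k, |1 - c k ^ m N - if k < N then 1 else 0| ≤ (1 / 2) ^ N * (1 / 2) ^ k := by
  have hc (k : ℕ) : 0 < 1 - (1 / 2 : ℝ) ^ (2 * (k + 1) ^ 2) ∧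
      1 - (1 / 2 : ℝ) ^ (2 * (k + 1) ^ 2) < 1 :=
    ⟨sub_pos.2 (pow_lt_one₀ (by norm_num) (by norm_num) (by positivity)),
      sub_lt_self 1 (by positivity)⟩
  refine ⟨fun k => 1 - (1 / 2) ^ (2 * (k + 1) ^ 2), fun N => 2 ^ (2 * N * (N + 1)),
    fun i j hij => ?_, hc, fun N k => ?_⟩
  · exact sub_le_sub_left (pow_le_pow_of_le_one (by norm_num) (by norm_num) (by gcongr)) 1
  -- the exponent `2 N (N + 1) - 2 (k + 1) ^ 2` of the quotient below is at least `N + k` if `k < N`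
  -- and at most `-(N + k)` if `k ≥ N`
  have hquot : ((2 ^ (2 * N * (N + 1)) : ℕ) : ℝ) * (1 - (1 - (1 / 2) ^ (2 * (k + 1) ^ 2))) =
      2 ^ (2 * N * (N + 1)) / 2 ^ (2 * (k + 1) ^ 2) := by
    push_cast
    rw [sub_sub_cancel, one_div, inv_pow, div_eq_mul_inv]
  rw [← pow_add, one_div_pow]
  refine abs_one_sub_pow_sub_ite_le ⟨(hc k).1.le, (hc k).2.le⟩ (by positivity)
    (fun hkN => ?_) fun hkN => ?_
  · rw [hquot, le_div_iff₀ (by positivity), ← pow_add]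
    exact pow_le_pow_right₀ one_le_two (by nlinarith)
  · rw [hquot, div_le_div_iff₀ (by positivity) (by positivity), ← pow_add, one_mul]
    exact pow_le_pow_right₀ one_le_two (by nlinarith)

section Operators

variable {X : Type*} [NormedAddCommGroup X] [NormedSpace ℂ X]

section SignAverage

/-- The average `signAvg k` as a seminorm on `X ^ k`, which gives access to the general theory of
seminorms. -/
noncomputable def signAvgSeminorm (k : ℕ) : Seminorm ℝ (Fin k → X) :=
  Seminorm.of (signAvg k)
    (fun v w => by
      simp only [signAvg, ← mul_add, ← Finset.sum_add_distrib, Pi.add_apply, smul_add]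
      gcongr with ε
      simp only [Finset.sum_add_distrib]
      exact norm_add_le _ _)
    fun r v => by
      simp only [signAvg, Pi.smul_apply, smul_comm _ r, ← Finset.smul_sum, norm_smul,
        ← Finset.mul_sum]
      exact mul_left_comm _ _ _

lemma signAvg_nonneg (k : ℕ) (v : Fin k → X) : 0 ≤ signAvg k v :=
  apply_nonneg (signAvgSeminorm k) v

lemma continuous_signAvg (k : ℕ) : Continuous (signAvg k : (Fin k → X) → ℝ) := by
  unfold signAvg
  fun_prop

lemma signAvg_congr_sign {k : ℕ} {v w : Fin k → X} (h : ∀ j, w j = v j ∨ w j = -v j) :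
    signAvg k w = signAvg k v := by
  have hs (j : Fin k) : ∃ e : Bool ≃ Bool, ∀ b : Bool,
      (if b then (1 : ℝ) else -1) • w j = (if e b then (1 : ℝ) else -1) • v j := by
    rcases h j with hj | hj
    · exact ⟨Equiv.refl Bool, fun b => by rw [hj, Equiv.refl_apply]⟩
    · exact ⟨Equiv.boolNot, fun b => by cases b <;> simp [hj]⟩
  choose e he using hs
  unfold signAvg
  congr 1
  exact Fintype.sum_equiv (Equiv.piCongrRight e) _ _ fun ε => by simp [he]

lemma signAvg_indicator_le {k : ℕ} (s : Set (Fin k)) (v : Fin k → X) :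
    signAvg k (s.indicator v) ≤ signAvg k v := by
  classical
  let w : Fin k → X := s.piecewise v (-v)
  have hw : signAvg k w = signAvg k v := signAvg_congr_sign fun j => by
    by_cases hj : j ∈ s <;> simp [w, hj]
  have hvw : s.indicator v = (1 / 2 : ℝ) • (v + w) := by
    ext j
    by_cases hj : j ∈ s
    · simp [w, hj, ← two_smul ℝ (v j), smul_smul]
    · simp [w, hj]
  have hadd : signAvg k (v + w) ≤ signAvg k v + signAvg k w :=
    map_add_le_add (signAvgSeminorm k) v w
  have hsmul : signAvg k ((1 / 2 : ℝ) • (v + w)) = ‖(1 / 2 : ℝ)‖ * signAvg k (v + w) :=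
    map_smul_eq_mul (signAvgSeminorm k) (1 / 2 : ℝ) (v + w)
  rw [hvw, hsmul, Real.norm_of_nonneg one_half_pos.le]
  linarith

lemma signAvg_map_le {k : ℕ} (A : X →L[ℂ] X) (v : Fin k → X) :
    signAvg k (fun j => A (v j)) ≤ ‖A‖ * signAvg k v := by
  have hA (ε : Fin k → Bool) : ∑ j, (if ε j then (1 : ℝ) else -1) • A (v j) =
      A (∑ j, (if ε j then (1 : ℝ) else -1) • v j) := by
    simp only [map_sum, ContinuousLinearMap.map_smul_of_tower]
  simp only [signAvg, hA]
  rw [mul_left_comm]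
  refine mul_le_mul_of_nonneg_left ?_ (by positivity)
  rw [Finset.mul_sum]
  exact Finset.sum_le_sum fun ε _ => A.le_opNorm _

end SignAverage

namespace IsRBounded

variable {F G : Set (X →L[ℂ] X)}

lemma mono (hG : IsRBounded G) (h : F ⊆ G) : IsRBounded F := by
  obtain ⟨C, hC, hG⟩ := hG
  exact ⟨C, hC, fun k T x hT => hG k T x fun j => h (hT j)⟩

lemma sub (hF : IsRBounded F) (hG : IsRBounded G) : IsRBounded (F - G) := by
  obtain ⟨C, hC, hF⟩ := hF
  obtain ⟨D, hD, hG⟩ := hG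
  refine ⟨C + D, add_nonneg hC hD, fun k T x hT => ?_⟩
  choose A hA B hB hAB using hT
  calc signAvg k (fun j => T j (x j))
      = signAvg k ((fun j => A j (x j)) - fun j => B j (x j)) := by
        simp only [← hAB]
        rfl
    _ ≤ signAvg k (fun j => A j (x j)) + signAvg k (fun j => B j (x j)) :=
        map_sub_le_add (signAvgSeminorm k) _ _
    _ ≤ C * signAvg k x + D * signAvg k x := add_le_add (hF k A x hA) (hG k B x hB)
    _ = (C + D) * signAvg k x := (add_mul _ _ _).symm

lemma union_neg (hF : IsRBounded F) : IsRBounded (F ∪ -F) := by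
  obtain ⟨C, hC, hF⟩ := hF
  refine ⟨C, hC, fun k T x hT => ?_⟩
  have hA (j : Fin k) : ∃ A ∈ F, T j = A ∨ T j = -A :=
    (hT j).elim (fun h => ⟨T j, h, Or.inl rfl⟩) fun h => ⟨-T j, h, Or.inr (neg_neg _).symm⟩
  choose A hAF hTA using hA
  have hsign : signAvg k (fun j => T j (x j)) = signAvg k (fun j => A j (x j)) :=
    signAvg_congr_sign fun j => (hTA j).imp (fun h => by rw [h]) fun h => by rw [h]; rfl
  exact hsign.trans_le (hF k A x hAF)

lemma convexHull (hF : IsRBounded F) : IsRBounded (convexHull ℝ F) := by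
  obtain ⟨C, hC, hF⟩ := hF
  refine ⟨C, hC, fun k T x hT => ?_⟩
  let applyToTuple : (Fin k → X →L[ℂ] X) →ₗ[ℝ] Fin k → X :=
    { toFun := fun T j => T j (x j)
      map_add' := fun _ _ => rfl
      map_smul' := fun _ _ => rfl }
  have hconv : ConvexOn ℝ Set.univ ((signAvgSeminorm k).comp applyToTuple) := Seminorm.convexOn _
  have hT' : T ∈ _root_.convexHull ℝ (Set.univ.pi fun _ => F) := by
    rw [convexHull_pi]
    exact fun j _ => hT j
  -- maximum principle: on a product of convex hulls, `signAvg` is largest at tuples from `F`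
  obtain ⟨A, hA, hle⟩ := hconv.exists_ge_of_mem_convexHull (Set.subset_univ _) hT'
  exact hle.trans (hF k A x fun j => hA j trivial)

lemma absConvexHull (hF : IsRBounded F) : IsRBounded (absConvexHull ℝ F) := by
  rw [← convexHull_union_neg_eq_absConvexHull]
  exact hF.union_neg.convexHull

lemma of_forall_exists_tendsto (hF : IsRBounded F)
    (h : ∀ S ∈ G, ∃ A : ℕ → X →L[ℂ] X, (∀ n, A n ∈ F) ∧
      ∀ x, Tendsto (fun n => A n x) atTop (𝓝 (S x))) : IsRBounded G := by
  obtain ⟨C, hC, hF⟩ := hF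
  refine ⟨C, hC, fun k T x hT => ?_⟩
  choose A hAF hlim using fun j => h (T j) (hT j)
  have hlim' : Tendsto (fun n => signAvg k fun j => A j n (x j)) atTop
      (𝓝 (signAvg k fun j => T j (x j))) :=
    ((continuous_signAvg k).tendsto _).comp (tendsto_pi_nhds.2 fun j => hlim j (x j))
  exact le_of_tendsto' hlim' fun n => hF k (fun j => A j n) x fun j => hAF j n

end IsRBounded

lemma isRBounded_range_of_summable_norm {ι : Type*} {A : ι → X →L[ℂ] X}
    (hA : Summable fun i => ‖A i‖) : IsRBounded (Set.range A) := by
  classical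
  refine ⟨∑' i, ‖A i‖, tsum_nonneg fun i => norm_nonneg _, fun k T x hT => ?_⟩
  choose i hi using hT
  let s : Finset ι := Finset.univ.image i
  let block (l : ι) : Fin k → X := fun j => A l ({j | i j = l}.indicator x j)
  have hblock (l : ι) : signAvg k (block l) ≤ ‖A l‖ * signAvg k x :=
    (signAvg_map_le (A l) _).trans (by gcongr; exact signAvg_indicator_le _ x)
  have hsplit : (fun j => T j (x j)) = ∑ l ∈ s, block l := by
    ext j
    rw [Finset.sum_apply, Finset.sum_eq_single (i j) (fun l _ hl => by simp [block, hl.symm])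
      (fun h => (h (Finset.mem_image_of_mem i (Finset.mem_univ j))).elim)]
    simp [block, hi]
  calc signAvg k (fun j => T j (x j))
      = signAvg k (∑ l ∈ s, block l) := by rw [hsplit]
    _ ≤ ∑ l ∈ s, signAvg k (block l) :=
        Finset.le_sum_of_subadditive (signAvgSeminorm k) (map_zero _).le
          (map_add_le_add _) s block
    _ ≤ ∑ l ∈ s, ‖A l‖ * signAvg k x := Finset.sum_le_sum fun l _ => hblock l
    _ = (∑ l ∈ s, ‖A l‖) * signAvg k x := (Finset.sum_mul _ _ _).symm
    _ ≤ (∑' l, ‖A l‖) * signAvg k x :=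
        mul_le_mul_of_nonneg_right (hA.sum_le_tsum s fun l _ => norm_nonneg _)
          (signAvg_nonneg k x)

lemma isRBounded_singleton (A : X →L[ℂ] X) : IsRBounded {A} := by
  simpa using isRBounded_range_of_summable_norm (A := fun _ : Unit => A) Summable.of_finite

/-- An operator `T` is `R`-Ritt if `{T ^ n : n ≥ 0}` and `{n T ^ n (1 - T) : n ≥ 1}` are
`R`-bounded. -/
def IsRRitt (T : X →L[ℂ] X) : Prop :=
  IsRBounded (Set.range fun n : ℕ => T ^ n) ∧
    IsRBounded {S : X →L[ℂ] X | ∃ n : ℕ, 1 ≤ n ∧ S = (n : ℂ) • (T ^ n * (1 - T))}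

/-- The operator `S` is the multiplier `M_a` of the decomposition `(p n)`. The defining property
used here makes the algebra of multipliers immediate; for a Schauder decomposition it is equivalent
to `S x = ∑ a_n p_n x`, see `IsSchauderDecomposition.isMultiplier_iff_tendsto`. -/
def IsMultiplier (p : ℕ → X →L[ℂ] X) (a : ℕ → ℂ) (S : X →L[ℂ] X) : Prop :=
  ∀ k, p k * S = a k • p k

/-- The multipliers `M_a` with nondecreasing symbol `0 ≤ a ≤ 1`. -/
def monotoneMultipliers (p : ℕ → X →L[ℂ] X) : Set (X →L[ℂ] X) :=
  {S | ∃ a : ℕ → ℝ, Monotone a ∧ (∀ n, a n ∈ Set.Icc (0 : ℝ) 1) ∧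
    IsMultiplier p (fun n => (a n : ℂ)) S}

variable {p : ℕ → X →L[ℂ] X}

namespace IsMultiplier

variable {a b : ℕ → ℂ} {S T : X →L[ℂ] X}

lemma one : IsMultiplier p 1 1 := fun k => by simp

lemma add (hS : IsMultiplier p a S) (hT : IsMultiplier p b T) : IsMultiplier p (a + b) (S + T) :=
  fun k => by rw [mul_add, hS k, hT k, Pi.add_apply, add_smul]

lemma sub (hS : IsMultiplier p a S) (hT : IsMultiplier p b T) : IsMultiplier p (a - b) (S - T) :=
  fun k => by rw [mul_sub, hS k, hT k, Pi.sub_apply, sub_smul]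

lemma smul (r : ℂ) (hS : IsMultiplier p a S) : IsMultiplier p (r • a) (r • S) :=
  fun k => by rw [mul_smul_comm, hS k, Pi.smul_apply, smul_assoc]

lemma mul (hS : IsMultiplier p a S) (hT : IsMultiplier p b T) : IsMultiplier p (a * b) (S * T) :=
  fun k => by rw [← mul_assoc, hS k, smul_mul_assoc, hT k, smul_smul, Pi.mul_apply]

lemma pow (hS : IsMultiplier p a S) (n : ℕ) : IsMultiplier p (a ^ n) (S ^ n) := by
  induction n with
  | zero => simpa using one
  | succ n ih => simpa only [pow_succ] using ih.mul hS

lemma pow_mem_monotoneMultipliers {c : ℕ → ℝ} (hc : Monotone c)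
    (hc01 : ∀ n, c n ∈ Set.Icc (0 : ℝ) 1) (hT : IsMultiplier p (fun n => (c n : ℂ)) T) (n : ℕ) :
    T ^ n ∈ monotoneMultipliers p := by
  refine ⟨fun k => c k ^ n, fun i j hij => pow_le_pow_left₀ (hc01 i).1 (hc hij) n,
    fun k => ⟨pow_nonneg (hc01 k).1 n, pow_le_one₀ (hc01 k).1 (hc01 k).2⟩, ?_⟩
  convert hT.pow n
  simp

lemma pow_mul_one_add_smul_mem_monotoneMultipliers {c : ℕ → ℝ} (hc : Monotone c)
    (hc01 : ∀ n, c n ∈ Set.Icc (0 : ℝ) 1) (hT : IsMultiplier p (fun n => (c n : ℂ)) T) (n : ℕ) :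
    T ^ n * (1 + (n : ℂ) • (1 - T)) ∈ monotoneMultipliers p := by
  refine ⟨fun k => c k ^ n * (1 + n * (1 - c k)),
    fun i j hij => monotoneOn_pow_mul_one_add_mul_one_sub n (hc01 i) (hc01 j) (hc hij),
    fun k => pow_mul_one_add_mul_one_sub_mem_Icc n (hc01 k), ?_⟩
  convert (hT.pow n).mul (one.add ((one.sub hT).smul n))
  simp

end IsMultiplier

namespace IsSchauderDecomposition

variable {a : ℕ → ℂ} {S T : X →L[ℂ] X}

lemma mul_eq_ite (hp : IsSchauderDecomposition p) (m n : ℕ) :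
    p m * p n = if m = n then p m else 0 := by
  split_ifs with h
  · exact h ▸ hp.1 m
  · exact hp.2.1 m n h

lemma isMultiplier_partialSum (hp : IsSchauderDecomposition p) (N : ℕ) :
    IsMultiplier p (fun k => if k < N then 1 else 0) (partialSum p N) := fun k => by
  simp [partialSum, Finset.mul_sum, hp.mul_eq_ite]

lemma isMultiplier_iff_tendsto (hp : IsSchauderDecomposition p) :
    IsMultiplier p a S ↔
      ∀ x, Tendsto (fun N => ∑ n ∈ Finset.range N, a n • p n x) atTop (𝓝 (S x)) := by
  refine ⟨fun h x => ?_, fun h k => ContinuousLinearMap.ext fun x => ?_⟩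
  · have hpS (n : ℕ) : p n (S x) = a n • p n x := DFunLike.congr_fun (h n) x
    simpa only [hpS] using hp.2.2 (S x)
  · have hlim : Tendsto (fun N => p k (∑ n ∈ Finset.range N, a n • p n x)) atTop (𝓝 (p k (S x))) :=
      ((p k).continuous.tendsto _).comp (h x)
    refine tendsto_nhds_unique hlim (tendsto_const_nhds.congr' ?_)
    filter_upwards [eventually_gt_atTop k] with N hN
    have hpp (n : ℕ) : p k (p n x) = if k = n then p k x else 0 := by
      rw [← mul_apply_eq_comp, hp.mul_eq_ite]
      split_ifs <;> rfl
    simp [map_sum, hpp, hN]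

lemma exists_norm_le [CompleteSpace X] (hp : IsSchauderDecomposition p) :
    ∃ B, ∀ k, ‖p k‖ ≤ B := by
  refine banach_steinhaus fun x => ?_
  have hdiff : Tendsto (fun k => p k x) atTop (𝓝 (x - x)) :=
    (((hp.2.2 x).comp (tendsto_add_atTop_nat 1)).sub (hp.2.2 x)).congr fun k => by
      simp [Finset.sum_range_succ]
  obtain ⟨C, hC⟩ := hdiff.norm.bddAbove_range
  exact ⟨C, fun k => hC ⟨k, rfl⟩⟩

lemma exists_isMultiplier_of_monotone [CompleteSpace X] (hp : IsSchauderDecomposition p)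
    {c : ℕ → ℝ} (hc : Monotone c) (hbdd : BddAbove (Set.range c)) :
    ∃ T, IsMultiplier p (fun n => (c n : ℂ)) T := by
  set L := ⨆ n, c n
  have hL : Tendsto (fun n => c n - L) atTop (𝓝 0) := by
    simpa only [L, sub_self] using (tendsto_atTop_ciSup hc hbdd).sub_const L
  have hconv (x : X) : ∃ y, Tendsto (fun N => ∑ n ∈ Finset.range N, (c n : ℂ) • p n x) atTop
      (𝓝 y) := by
    obtain ⟨b, hb⟩ := (hp.2.2 x).norm.bddAbove_range
    obtain ⟨y, hy⟩ := cauchySeq_tendsto_of_complete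
      (Monotone.cauchySeq_series_mul_of_tendsto_zero_of_bounded
        (fun i j hij => sub_le_sub_right (hc hij) L) hL fun n => hb ⟨n, rfl⟩)
    refine ⟨y + L • x, (hy.add ((hp.2.2 x).const_smul L)).congr fun N => ?_⟩
    simp [sub_smul, Finset.smul_sum]
  choose f hf using hconv
  let M (N : ℕ) : X →L[ℂ] X := ∑ n ∈ Finset.range N, (c n : ℂ) • p n
  have hM : Tendsto (fun N x => M N x) atTop (𝓝 f) :=
    tendsto_pi_nhds.2 fun x => by simpa [M] using hf x
  exact ⟨continuousLinearMapOfTendsto M hM, hp.isMultiplier_iff_tendsto.2 hf⟩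

lemma norm_le_of_isMultiplier (hp : IsSchauderDecomposition p) {B : ℝ} (hB : ∀ k, ‖p k‖ ≤ B)
    (hS : IsMultiplier p a S) (ha : Summable fun k => ‖a k‖) : ‖S‖ ≤ (∑' k, ‖a k‖) * B := by
  have hB0 : 0 ≤ B := (norm_nonneg _).trans (hB 0)
  refine S.opNorm_le_bound (mul_nonneg (tsum_nonneg fun k => norm_nonneg _) hB0) fun x => ?_
  refine le_of_tendsto' (hp.isMultiplier_iff_tendsto.1 hS x).norm fun N => ?_
  calc ‖∑ k ∈ Finset.range N, a k • p k x‖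
      ≤ ∑ k ∈ Finset.range N, ‖a k‖ * (B * ‖x‖) := norm_sum_le_of_le _ fun k _ => by
        rw [norm_smul]
        gcongr
        exact (p k).le_of_opNorm_le (hB k) x
    _ = (∑ k ∈ Finset.range N, ‖a k‖) * (B * ‖x‖) := (Finset.sum_mul _ _ _).symm
    _ ≤ (∑' k, ‖a k‖) * (B * ‖x‖) := by
        gcongr
        exact ha.sum_le_tsum _ fun k _ => norm_nonneg _
    _ = (∑' k, ‖a k‖) * B * ‖x‖ := (mul_assoc _ _ _).symm

lemma isRBounded_monotoneMultipliers (hp : IsSchauderDecomposition p)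
    (h : IsRBounded (Set.range fun N : ℕ => partialSum p (N + 1))) :
    IsRBounded (monotoneMultipliers p) := by
  refine (h.absConvexHull.sub h.absConvexHull).of_forall_exists_tendsto ?_
  rintro S ⟨a, ha, ha01, hS⟩
  refine ⟨fun N => ∑ k ∈ Finset.range (N + 1), a k • p k,
    sum_smul_mem_absConvexHull_sub_absConvexHull p ha ha01, fun x => ?_⟩
  simpa [Function.comp_def] using
    (hp.isMultiplier_iff_tendsto.1 hS x).comp (tendsto_add_atTop_nat 1)

theorem isRRitt_of_isRBounded_partialSum (hp : IsSchauderDecomposition p)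
    (h : IsRBounded (Set.range fun N : ℕ => partialSum p (N + 1))) {c : ℕ → ℝ} (hc : Monotone c)
    (hc01 : ∀ n, c n ∈ Set.Icc (0 : ℝ) 1) (hT : IsMultiplier p (fun n => (c n : ℂ)) T) :
    IsRRitt T := by
  have hM := hp.isRBounded_monotoneMultipliers h
  refine ⟨hM.mono (Set.range_subset_iff.2 (hT.pow_mem_monotoneMultipliers hc hc01)),
    (hM.sub hM).mono ?_⟩
  rintro _ ⟨n, -, rfl⟩
  exact ⟨_, hT.pow_mul_one_add_smul_mem_monotoneMultipliers hc hc01 n, _,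
    hT.pow_mem_monotoneMultipliers hc hc01 n, by simp [mul_add]⟩

lemma summable_norm_of_isMultiplier [CompleteSpace X] (hp : IsSchauderDecomposition p)
    {ι : Type*} {A : ι → X →L[ℂ] X} {b : ι → ℕ → ℂ} {u : ι → ℝ} {v : ℕ → ℝ}
    (hA : ∀ i, IsMultiplier p (b i) (A i)) (hu : Summable u) (hv : Summable v)
    (hb : ∀ i k, ‖b i k‖ ≤ u i * v k) : Summable fun i => ‖A i‖ := by
  obtain ⟨B, hB⟩ := hp.exists_norm_le
  have hB0 : 0 ≤ B := (norm_nonneg _).trans (hB 0)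
  refine (hu.mul_right ((∑' k, v k) * B)).of_nonneg_of_le (fun i => norm_nonneg _) fun i => ?_
  have huv : Summable fun k => u i * v k := hv.mul_left (u i)
  have hbi : Summable fun k => ‖b i k‖ := huv.of_nonneg_of_le (fun k => norm_nonneg _) (hb i)
  calc ‖A i‖ ≤ (∑' k, ‖b i k‖) * B := hp.norm_le_of_isMultiplier hB (hA i) hbi
    _ ≤ (∑' k, u i * v k) * B :=
        mul_le_mul_of_nonneg_right (hbi.tsum_le_tsum (hb i) huv) hB0
    _ = u i * ((∑' k, v k) * B) := by rw [tsum_mul_left, mul_assoc]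

theorem isRBounded_partialSum_of_isRBounded_pow [CompleteSpace X] (hp : IsSchauderDecomposition p)
    (h : ∀ c : ℕ → ℝ, Monotone c → (∀ n, 0 < c n ∧ c n < 1) → ∀ T : X →L[ℂ] X,
      IsMultiplier p (fun n => (c n : ℂ)) T → IsRBounded (Set.range fun n : ℕ => T ^ n)) :
    IsRBounded (Set.range (partialSum p)) := by
  obtain ⟨c, m, hc, hc01, hcm⟩ := exists_pow_approx_step
  obtain ⟨T, hT⟩ := hp.exists_isMultiplier_of_monotone hc
    ⟨1, Set.forall_mem_range.2 fun n => (hc01 n).2.le⟩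
  have hpow : IsRBounded ({1} - Set.range fun n : ℕ => T ^ n) :=
    (isRBounded_singleton 1).sub (h c hc hc01 T hT)
  have hmult (N : ℕ) : IsMultiplier p
      (fun k => ((1 - c k ^ m N - if k < N then 1 else 0 : ℝ) : ℂ))
      (1 - T ^ m N - partialSum p N) := by
    convert (IsMultiplier.one.sub (hT.pow (m N))).sub (hp.isMultiplier_partialSum N) with k
    by_cases hk : k < N <;> simp [hk]
  have herr : IsRBounded (Set.range fun N => 1 - T ^ m N - partialSum p N) :=
    isRBounded_range_of_summable_norm <|
      hp.summable_norm_of_isMultiplier hmult summable_geometric_two summable_geometric_two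
        fun N k => (Complex.norm_real _).trans_le (hcm N k)
  refine (hpow.sub herr).mono (Set.range_subset_iff.2 fun N => ?_)
  rw [← sub_sub_cancel (1 - T ^ m N) (partialSum p N)]
  exact Set.sub_mem_sub (Set.sub_mem_sub rfl ⟨m N, rfl⟩) ⟨N, rfl⟩

end IsSchauderDecomposition

end Operators

/-- A Schauder decomposition is `R`-Schauder iff every multiplier `T = M_c` associated
with a nondecreasing sequence `0 < c_n < 1` is `R`-Ritt. -/
theorem statement12 {X : Type*} [NormedAddCommGroup X] [NormedSpace ℂ X] [CompleteSpace X]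
    (p : ℕ → X →L[ℂ] X) (hp : IsSchauderDecomposition p) :
    IsRBounded (Set.range fun N : ℕ => partialSum p (N + 1)) ↔
      ∀ c : ℕ → ℝ, Monotone c → (∀ n, 0 < c n ∧ c n < 1) →
        ∀ T : X →L[ℂ] X,
          (∀ x : X, Tendsto (fun N => ∑ n ∈ Finset.range N, ((c n : ℝ) : ℂ) • p n x)
            atTop (nhds (T x))) →
          IsRBounded (Set.range fun n : ℕ => T ^ n) ∧
          IsRBounded {S : X →L[ℂ] X | ∃ n : ℕ, 1 ≤ n ∧ S = (n : ℂ) • (T ^ n * (1 - T))} := by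
  constructor
  · intro h c hc hc01 T hT
    exact hp.isRRitt_of_isRBounded_partialSum h hc (fun n => ⟨(hc01 n).1.le, (hc01 n).2.le⟩)
      (hp.isMultiplier_iff_tendsto.2 hT)
  · intro h
    refine (hp.isRBounded_partialSum_of_isRBounded_pow fun c hc hc01 T hT => ?_).mono
      (Set.range_comp_subset_range (· + 1) (partialSum p))
    exact (h c hc hc01 T (hp.isMultiplier_iff_tendsto.1 hT)).1
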